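/- Let N be a positive integer, let E, A be real N×N matrices with E invertible, let δt > 0, let f : ℝ^N → ℝ^N, let g : ℕ → ℝ^N, let x : ℕ → ℝ^N be given snapshots with defect d^k := E x^k − (A x^{k−1} + δt (f(x^{k−1}) + g^k)), and let x̃ : ℕ → ℝ^N be an approximate solution. Define the residual r^k := A x̃^{k−1} + δt (f(x̃^{k−1}) + g^k) + d^k − E x̃^k and the auxiliary residual r̆^k := A x^{k−1} + δt (f(x^{k−1}) + g^k) + d^k − E x̃^k. Let c ∈ ℝ^N, let x̃_du ∈ ℝ^N with dual residual r_du := −c − Eᵀ x̃_du, and define the true output y^k := cᵀ x^k and the modified output ȳ^k := cᵀ x̃^k − x̃_duᵀ r^k. Then for every k ≥ 1, |y^k − ȳ^k| ≤ ‖E^{−1}‖₂ · ‖r_du‖₂ · ‖r̆^k‖₂ + ‖x̃_du‖₂ · ‖r^k − r̆^k‖₂. -/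

import Mathlib

open Matrix
open scoped Matrix.Norms.L2Operator

/-- Matrix-vector multiplication, viewed as a map on Euclidean space (so that the
Euclidean 2-norm is used on the result). -/
noncomputable def matVec {N : ℕ} (M : Matrix (Fin N) (Fin N) ℝ)
    (v : EuclideanSpace ℝ (Fin N)) : EuclideanSpace ℝ (Fin N) :=
  (EuclideanSpace.equiv (Fin N) ℝ).symm (M.mulVec v)

/-!
With `e = x - x̃` the error, the defect is chosen so that the auxiliary residual is exactly `E e`.
Since `c = -r_du - Eᵀ x̃_du`, moving `Eᵀ` across the pairing gives
`cᵀ e = -r_duᵀ e - x̃_duᵀ r̆`, and the correction `x̃_duᵀ r` of the output cancels the last term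
up to `r - r̆`. Cauchy–Schwarz and `‖e‖ ≤ ‖E⁻¹‖ ‖r̆‖` finish the argument.
-/

open scoped InnerProductSpace InnerProduct

section ImexStep

variable {V W : Type*} [AddCommGroup V] [AddCommGroup W]

/-- The defect of the step `u ↦ v` in the scheme `E v = Φ u`, where `E` is the implicit part and
`Φ` the whole explicit part, including inputs and step size. -/
def imexDefect (E Φ : V → W) (u v : V) : W :=
  E v - Φ u

/-- The residual of the step `u ↦ v` in the scheme `E v = Φ u + d` corrected by `d`. Taking for `u`
the previous approximation gives the residual of the reduced model, taking the previous snapshot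
gives the auxiliary residual. -/
def imexResidual (E Φ : V → W) (d : W) (u v : V) : W :=
  Φ u + d - E v

theorem imexResidual_imexDefect {F : Type*} [FunLike F V W] [AddMonoidHomClass F V W]
    (E : F) (Φ : V → W) (u v v' : V) :
    imexResidual E Φ (imexDefect E Φ u v) u v' = E (v - v') := by
  rw [imexResidual, imexDefect, add_sub_cancel, map_sub]

end ImexStep

section DualWeightedResidual

variable {𝕜 V W : Type*} [RCLike 𝕜]
  [NormedAddCommGroup V] [InnerProductSpace 𝕜 V]
  [NormedAddCommGroup W] [InnerProductSpace 𝕜 W]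

/-- The output `⟪c, v⟫` of an approximation `v`, corrected by its residual `r` weighted with the
approximate dual solution `z`. -/
def modifiedOutput (c : V) (z : W) (v : V) (r : W) : 𝕜 :=
  ⟪c, v⟫_𝕜 - ⟪z, r⟫_𝕜

variable [CompleteSpace V] [CompleteSpace W]

/-- The residual of `z` in the dual equation `E† z = -c`. -/
noncomputable def dualResidual (E : V →L[𝕜] W) (c : V) (z : W) : V :=
  -c - (E†) z

theorem inner_eq_neg_inner_dualResidual_sub (E : V →L[𝕜] W) (c e : V) (z : W) :
    ⟪c, e⟫_𝕜 = -⟪dualResidual E c z, e⟫_𝕜 - ⟪z, E e⟫_𝕜 := by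
  rw [dualResidual, inner_sub_left, inner_neg_left, ContinuousLinearMap.adjoint_inner_left]
  ring

theorem inner_sub_modifiedOutput (E : V →L[𝕜] W) (c v v' : V) (z r : W) :
    ⟪c, v⟫_𝕜 - modifiedOutput c z v' r =
      -⟪dualResidual E c z, v - v'⟫_𝕜 + ⟪z, r - E (v - v')⟫_𝕜 := by
  calc ⟪c, v⟫_𝕜 - modifiedOutput c z v' r
      = ⟪c, v - v'⟫_𝕜 + ⟪z, r⟫_𝕜 := by rw [modifiedOutput, inner_sub_right]; ring
    _ = -⟪dualResidual E c z, v - v'⟫_𝕜 + ⟪z, r - E (v - v')⟫_𝕜 := by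
        rw [inner_eq_neg_inner_dualResidual_sub E c (v - v') z, inner_sub_right z]; ring

theorem norm_inner_sub_modifiedOutput_le {E : V →L[𝕜] W} {S : W →L[𝕜] V}
    (hS : Function.LeftInverse S E) (c v v' : V) (z r : W) :
    ‖⟪c, v⟫_𝕜 - modifiedOutput c z v' r‖ ≤
      ‖S‖ * ‖dualResidual E c z‖ * ‖E (v - v')‖ + ‖z‖ * ‖r - E (v - v')‖ := by
  have error_le : ‖v - v'‖ ≤ ‖S‖ * ‖E (v - v')‖ := by
    simpa only [hS (v - v')] using S.le_opNorm (E (v - v'))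
  calc ‖⟪c, v⟫_𝕜 - modifiedOutput c z v' r‖
      ≤ ‖⟪dualResidual E c z, v - v'⟫_𝕜‖ + ‖⟪z, r - E (v - v')⟫_𝕜‖ := by
        rw [inner_sub_modifiedOutput E, ← norm_neg ⟪dualResidual E c z, v - v'⟫_𝕜]
        exact norm_add_le _ _
    _ ≤ ‖dualResidual E c z‖ * ‖v - v'‖ + ‖z‖ * ‖r - E (v - v')‖ :=
        add_le_add (norm_inner_le_norm _ _) (norm_inner_le_norm _ _)
    _ ≤ ‖dualResidual E c z‖ * (‖S‖ * ‖E (v - v')‖) + ‖z‖ * ‖r - E (v - v')‖ := by gcongr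
    _ = ‖S‖ * ‖dualResidual E c z‖ * ‖E (v - v')‖ + ‖z‖ * ‖r - E (v - v')‖ := by ring

theorem modified_output_error_bound_general {E : V →L[𝕜] W} {S : W →L[𝕜] V}
    (hS : Function.LeftInverse S E) (Φ : V → W) (u v u' v' c : V) (z : W) {d : W}
    (hd : d = imexDefect E Φ u v) :
    ‖⟪c, v⟫_𝕜 - modifiedOutput c z v' (imexResidual E Φ d u' v')‖ ≤
      ‖S‖ * ‖dualResidual E c z‖ * ‖imexResidual E Φ d u v'‖ +
        ‖z‖ * ‖imexResidual E Φ d u' v' - imexResidual E Φ d u v'‖ := by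
  have aux_eq : imexResidual E Φ d u v' = E (v - v') := by rw [hd, imexResidual_imexDefect]
  rw [aux_eq]
  exact norm_inner_sub_modifiedOutput_le hS c v v' z _

end DualWeightedResidual

section Matrix

variable {𝕜 n : Type*} [RCLike 𝕜] [Fintype n]

theorem dotProduct_eq_inner (u v : EuclideanSpace ℝ n) : u ⬝ᵥ v = ⟪u, v⟫_ℝ := by
  rw [EuclideanSpace.inner_eq_star_dotProduct, star_trivial, dotProduct_comm]

theorem matVec_eq_toEuclideanCLM {N : ℕ} (M : Matrix (Fin N) (Fin N) ℝ) :
    matVec M = toEuclideanCLM (𝕜 := ℝ) M :=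
  rfl

variable [DecidableEq n]

theorem adjoint_toEuclideanCLM (M : Matrix n n 𝕜) :
    (toEuclideanCLM (𝕜 := 𝕜) M)† = toEuclideanCLM (𝕜 := 𝕜) Mᴴ :=
  (map_star (toEuclideanCLM (n := n) (𝕜 := 𝕜)) M).symm

theorem leftInverse_toEuclideanCLM_inv {M : Matrix n n 𝕜} (hM : IsUnit M) :
    Function.LeftInverse (toEuclideanCLM (𝕜 := 𝕜) M⁻¹) (toEuclideanCLM (𝕜 := 𝕜) M) := by
  intro v
  rw [← mul_apply_eq_comp, ← map_mul, nonsing_inv_mul M ((isUnit_iff_isUnit_det M).1 hM),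
    map_one, one_apply_eq_self]

end Matrix

/-- A posteriori error bound for the modified output of the defect-corrected scheme
(Theorem 3.1 of the paper):
`|y^k − ȳ^k| ≤ ‖E⁻¹‖ ‖r_du‖ ‖r̆^k‖ + ‖x̃_du‖ ‖r^k − r̆^k‖`. -/
theorem modified_output_error_bound
    (N : ℕ) (hN : 0 < N)
    (E A : Matrix (Fin N) (Fin N) ℝ) (hE : IsUnit E)
    (δt : ℝ) (hδt : 0 < δt)
    (f : EuclideanSpace ℝ (Fin N) → EuclideanSpace ℝ (Fin N))
    (g x xt : ℕ → EuclideanSpace ℝ (Fin N))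
    (d : ℕ → EuclideanSpace ℝ (Fin N))
    (hd : ∀ k, 1 ≤ k →
      d k = matVec E (x k) - (matVec A (x (k - 1)) + δt • (f (x (k - 1)) + g k)))
    (r : ℕ → EuclideanSpace ℝ (Fin N))
    (hr : ∀ k, 1 ≤ k →
      r k = matVec A (xt (k - 1)) + δt • (f (xt (k - 1)) + g k) + d k - matVec E (xt k))
    (rb : ℕ → EuclideanSpace ℝ (Fin N))
    (hrb : ∀ k, 1 ≤ k →
      rb k = matVec A (x (k - 1)) + δt • (f (x (k - 1)) + g k) + d k - matVec E (xt k))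
    (c xtdu : EuclideanSpace ℝ (Fin N))
    (rdu : EuclideanSpace ℝ (Fin N))
    (hrdu : rdu = -c - matVec E.transpose xtdu)
    (y ybar : ℕ → ℝ)
    (hy : ∀ k, y k = c ⬝ᵥ x k)
    (hybar : ∀ k, ybar k = c ⬝ᵥ xt k - xtdu ⬝ᵥ r k) :
    ∀ k, 1 ≤ k →
      |y k - ybar k| ≤ ‖E⁻¹‖ * ‖rdu‖ * ‖rb k‖ + ‖xtdu‖ * ‖r k - rb k‖ := by
  intro k hk
  simpa only [modifiedOutput, dualResidual, imexResidual, adjoint_toEuclideanCLM,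
    conjTranspose_eq_transpose_of_trivial, l2_opNorm_toEuclideanCLM, ← matVec_eq_toEuclideanCLM,
    ← dotProduct_eq_inner, ← hr k hk, ← hrb k hk, ← hrdu, ← hybar, ← hy, Real.norm_eq_abs] using
    modified_output_error_bound_general (leftInverse_toEuclideanCLM_inv hE)
      (fun v ↦ matVec A v + δt • (f v + g k)) (x (k - 1)) (x k) (xt (k - 1)) (xt k) c xtdu
      (hd k hk)
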